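/- Let μ be a non-atomic self-conformal measure on ℝ (i.e. d = 1). Then there exists α > 0 such that for all β > α, the set of x ∈ ℝ for which |x − p/q| ≤ q^{−2}(log q)^{−β} holds for infinitely many pairs (p,q) ∈ ℤ × ℕ with q ≥ 2 has μ-measure zero. -/

import Mathlib

noncomputable section
open MeasureTheory Metric Filter Topology

variable {E : Type*} [NormedAddCommGroup E] [NormedSpace ℝ E]

/-- `f` is a contraction with ratio `r ∈ (0,1)`. -/
def IsContractionWith (r : ℝ) (f : E → E) : Prop :=
  0 < r ∧ r < 1 ∧ ∀ x y, ‖f x - f y‖ ≤ r * ‖x - y‖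

/-- `f` is a contracting similarity with ratio `r ∈ (0,1)`. -/
def IsSimilarityWith (r : ℝ) (f : E → E) : Prop :=
  0 < r ∧ r < 1 ∧ ∀ x y, ‖f x - f y‖ = r * ‖x - y‖

/-- A self-conformal IFS. -/
def IsSelfConformalIFS {A : Type*} [Fintype A] (φ : A → E → E) : Prop :=
  2 ≤ Fintype.card A ∧
  (∀ a, ∃ r, IsContractionWith r (φ a)) ∧
  (∀ a, ContDiff ℝ 1 (φ a)) ∧
  (∀ a x, 0 < ‖fderiv ℝ (φ a) x‖ ∧ ∀ v, ‖fderiv ℝ (φ a) x v‖ = ‖fderiv ℝ (φ a) x‖ * ‖v‖) ∧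
  (∃ H α₀ : ℝ, 0 < H ∧ 0 < α₀ ∧ ∀ a x y,
    |‖fderiv ℝ (φ a) x‖ - ‖fderiv ℝ (φ a) y‖| ≤ H * ‖x - y‖ ^ α₀) ∧
  (∃ a₁ a₂ x₁ x₂, φ a₁ x₁ = x₁ ∧ φ a₂ x₂ = x₂ ∧ x₁ ≠ x₂)

/-- A self-similar IFS. -/
def IsSelfSimilarIFS {A : Type*} [Fintype A] (φ : A → E → E) : Prop :=
  2 ≤ Fintype.card A ∧
  (∀ a, ∃ r, IsSimilarityWith r (φ a)) ∧
  (∃ a₁ a₂ x₁ x₂, φ a₁ x₁ = x₁ ∧ φ a₂ x₂ = x₂ ∧ x₁ ≠ x₂)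

/-- The IFS is affinely irreducible: no (nonempty) proper affine subspace is preserved. -/
def AffinelyIrreducible {A : Type*} (φ : A → E → E) : Prop :=
  ¬ ∃ W : AffineSubspace ℝ E, (W : Set E).Nonempty ∧ W ≠ ⊤ ∧
      ∀ a, φ a '' (W : Set E) ⊆ (W : Set E)

/-- Closed `ε`-neighbourhood of an affine subspace. -/
def affNbhd (W : AffineSubspace ℝ E) (ε : ℝ) : Set E :=
  {y | Metric.infDist y (W : Set E) ≤ ε}

/-- topological support of a measure -/
def msupport [MeasurableSpace E] (μ : Measure E) : Set E :=
  {x | ∀ r : ℝ, 0 < r → 0 < μ (Metric.ball x r)}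

/-- distance between two sets -/
def setDist (S T : Set E) : ℝ := sInf (Set.image2 dist S T)

/-- map corresponding to a finite word (as a list) -/
def listMap {A : Type*} (φ : A → E → E) : List A → E → E
  | [] => id
  | a :: l => φ a ∘ listMap φ l

/-- map corresponding to the first `n` letters of an infinite word -/
def wordMap {A : Type*} (φ : A → E → E) : ℕ → (ℕ → A) → E → E
  | 0, _ => id
  | n + 1, a => φ (a 0) ∘ wordMap φ n (fun k => a (k + 1))

/-- set of `Ψ`-well-approximable vectors in `ℝ^d` -/
def WApprox (d : ℕ) (Ψ : ℕ → ℝ) : Set (EuclideanSpace ℝ (Fin d)) :=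
  {x | {pq : (Fin d → ℤ) × ℕ | 0 < pq.2 ∧
        ∀ i, |x i - (pq.1 i : ℝ) / (pq.2 : ℝ)| ≤ Ψ pq.2}.Infinite}

/-- set of singular vectors in `ℝ^d` -/
def Sing (d : ℕ) : Set (EuclideanSpace ℝ (Fin d)) :=
  {x | ∀ c : ℝ, 0 < c → ∃ T : ℝ, 0 < T ∧ ∀ t : ℝ, T ≤ t →
    ∃ q : ℕ, 0 < q ∧ (q : ℝ) < t ∧
      ∀ i, |(q : ℝ) * x i - round ((q : ℝ) * x i)| ≤ c * t ^ (-(1 : ℝ) / (d : ℝ))}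

/-!
Hölder regularity of `μ` comes from two words whose images are far apart: a small set misses one of
them, hence loses a fixed proportion of its mass whenever the scale shrinks by a fixed factor.

Fix `r ≤ 1` and an `r`-separated set `S`. Cutting every infinite word as soon as its derivative
drops to at most `r` writes `μ` as an average of images of `μ` under maps which, by bounded
distortion, have derivative comparable to `r`. On each of these pieces only boundedly many points of
`S` matter, and by Hölder regularity their `r * ε`-neighbourhoods have mass `O(ε ^ γ)`; so the
`r * ε`-neighbourhood of `S` has `μ`-mass `O(ε ^ γ)`, uniformly in `r`.

The fractions with denominator at most `2 ^ (k + 1)` are `4 ^ -(k + 1)`-separated, so those `x` with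
`|x - p / q| ≤ ε q / q ^ 2` for some `2 ^ k ≤ q < 2 ^ (k + 1)` have mass `O(ε (2 ^ k) ^ γ)`. For
`ε q = (log q) ^ (-β)` this is `O(k ^ (-β * γ))`, which is summable once `β > 1 / γ`, and the
Borel–Cantelli lemma applies.
-/

/-! ### Stationary measures -/

/-- `μ` is a stationary probability law of the random walk applying the measurable map `φ a` with
probability `p a > 0`. -/
structure IsStationaryMeasure {A X : Type*} [Fintype A] [MeasurableSpace X] (φ : A → X → X)
    (p : A → ℝ) (μ : Measure X) : Prop where
  measurable : ∀ a, Measurable (φ a)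
  pos : ∀ a, 0 < p a
  sum_eq_one : ∑ a, p a = 1
  eq_sum_map : μ = ∑ a, ENNReal.ofReal (p a) • μ.map (φ a)

namespace IsStationaryMeasure

variable {A X : Type*} [Fintype A] [MeasurableSpace X] {φ : A → X → X} {p : A → ℝ}
  {μ : Measure X}

lemma nonempty (h : IsStationaryMeasure φ p μ) : Nonempty A := by
  by_contra hA
  rw [not_nonempty_iff] at hA
  simpa using h.sum_eq_one

variable [IsFiniteMeasure μ]

lemma measureReal_eq_sum (h : IsStationaryMeasure φ p μ) {S : Set X} (hS : MeasurableSet S) :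
    μ.real S = ∑ a, p a * μ.real (φ a ⁻¹' S) := by
  have hsum : μ S = ∑ a, ENNReal.ofReal (p a) * μ (φ a ⁻¹' S) := by
    conv_lhs => rw [h.eq_sum_map]
    simp only [Measure.finsetSum_apply, Measure.smul_apply, smul_eq_mul,
      Measure.map_apply (h.measurable _) hS]
  rw [measureReal_def, hsum, ENNReal.toReal_sum fun a _ =>
    ENNReal.mul_ne_top ENNReal.ofReal_ne_top (measure_ne_top _ _)]
  simp only [ENNReal.toReal_mul, ENNReal.toReal_ofReal (h.pos _).le, measureReal_def]

lemma measureReal_le_add (h : IsStationaryMeasure φ p μ) {S : Set X} (hS : MeasurableSet S) {m : ℝ}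
    (hm : ∀ b, μ.real (φ b ⁻¹' S) ≤ m) (a : A) :
    μ.real S ≤ p a * μ.real (φ a ⁻¹' S) + (1 - p a) * m := by
  classical
  have hrest : ∑ b ∈ Finset.univ.erase a, p b = 1 - p a := by
    rw [← h.sum_eq_one, ← Finset.add_sum_erase _ _ (Finset.mem_univ a), add_sub_cancel_left]
  rw [h.measureReal_eq_sum hS, ← Finset.add_sum_erase _ _ (Finset.mem_univ a), ← hrest,
    Finset.sum_mul]
  gcongr with b
  exacts [(h.pos b).le, hm b]

lemma measureReal_le (h : IsStationaryMeasure φ p μ) {S : Set X} (hS : MeasurableSet S) {m : ℝ}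
    (hm : ∀ a, μ.real (φ a ⁻¹' S) ≤ m) : μ.real S ≤ m :=
  calc μ.real S = ∑ a, p a * μ.real (φ a ⁻¹' S) := h.measureReal_eq_sum hS
    _ ≤ ∑ a, p a * m := by gcongr with a; exacts [(h.pos a).le, hm a]
    _ = m := by rw [← Finset.sum_mul, h.sum_eq_one, one_mul]

end IsStationaryMeasure

lemma tendsto_measureReal_compl_closedBall {X : Type*} [PseudoMetricSpace X] [MeasurableSpace X]
    [OpensMeasurableSpace X] (μ : Measure X) [IsFiniteMeasure μ] (x₀ : X) :
    Tendsto (fun t => μ.real (closedBall x₀ t)ᶜ) atTop (𝓝 0) := by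
  have hempty : ⋂ t, (closedBall x₀ t)ᶜ = ∅ := by
    rw [← Set.compl_iUnion, Set.compl_empty_iff]
    exact Set.eq_univ_of_forall fun x => Set.mem_iUnion.2 ⟨dist x x₀, mem_closedBall.2 le_rfl⟩
  have hlim := tendsto_measure_iInter_atTop (μ := μ)
    (fun t => (measurableSet_closedBall (x := x₀) (ε := t)).compl.nullMeasurableSet)
    (fun s t hst => Set.compl_subset_compl.2 (closedBall_subset_closedBall hst))
    ⟨0, measure_ne_top _ _⟩
  rw [hempty, measure_empty] at hlim
  exact (ENNReal.tendsto_toReal ENNReal.zero_ne_top).comp hlim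

lemma exists_dist_le_mul_dist_add {A X : Type*} [Finite A] [PseudoMetricSpace X]
    {φ : A → X → X} {ρ : NNReal} (hρ : ∀ a, LipschitzWith ρ (φ a)) (x₀ : X) :
    ∃ M : ℝ, ∀ a x, dist (φ a x) x₀ ≤ ρ * dist x x₀ + M := by
  obtain ⟨M, hM⟩ := Finite.exists_le fun a => dist (φ a x₀) x₀
  refine ⟨M, fun a x => (dist_triangle _ (φ a x₀) _).trans ?_⟩
  exact add_le_add ((hρ a).dist_le_mul x x₀) (hM a)

namespace IsStationaryMeasure

variable {A X : Type*} [Fintype A] [PseudoMetricSpace X] [MeasurableSpace X]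
  [OpensMeasurableSpace X] {φ : A → X → X} {p : A → ℝ} {μ : Measure X}

lemma ae_mem_closedBall [IsFiniteMeasure μ] (h : IsStationaryMeasure φ p μ) {x₀ : X} {ρ M R : ℝ}
    (hρ0 : 0 ≤ ρ) (hρ1 : ρ < 1) (hφ : ∀ a x, dist (φ a x) x₀ ≤ ρ * dist x x₀ + M)
    (hR : M < (1 - ρ) * R) : ∀ᵐ x ∂μ, x ∈ closedBall x₀ R := by
  have hstep : ∀ s t, ρ * t + M ≤ s → μ.real (closedBall x₀ s)ᶜ ≤ μ.real (closedBall x₀ t)ᶜ := by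
    refine fun s t hst => h.measureReal_le measurableSet_closedBall.compl fun a => ?_
    refine measureReal_mono fun x hx hxt => hx (mem_closedBall.2 ?_)
    calc dist (φ a x) x₀ ≤ ρ * dist x x₀ + M := hφ a x
      _ ≤ ρ * t + M := by gcongr; exact hxt
      _ ≤ s := hst
  -- Each step of the walk consumes at least the slack `δ` of the strict inequality `hR`.
  set δ := (1 - ρ) * R - M
  have hδ : 0 < δ := sub_pos.2 hR
  have hiter : ∀ n : ℕ, μ.real (closedBall x₀ R)ᶜ ≤ μ.real (closedBall x₀ (R + n * δ))ᶜ := by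
    intro n
    induction n with
    | zero => simp
    | succ n ih =>
      refine ih.trans (hstep _ _ ?_)
      have : 0 ≤ (1 - ρ) * ((n + 1) * δ) := by have := sub_pos.2 hρ1; positivity
      push_cast
      linarith
  have hzero : μ.real (closedBall x₀ R)ᶜ ≤ 0 :=
    ge_of_tendsto' ((tendsto_measureReal_compl_closedBall μ x₀).comp
      (tendsto_atTop_add_const_left _ R
        (tendsto_natCast_atTop_atTop.atTop_mul_const hδ))) hiter
  exact (measureReal_eq_zero_iff).1 (le_antisymm hzero measureReal_nonneg)

lemma exists_invariant_closedBall [IsFiniteMeasure μ] (h : IsStationaryMeasure φ p μ) {ρ : NNReal}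
    (hρ1 : ρ < 1) (hρ : ∀ a, LipschitzWith ρ (φ a)) (x₀ : X) :
    ∃ R, (∀ᵐ x ∂μ, x ∈ closedBall x₀ R) ∧
      (∀ a, Set.MapsTo (φ a) (closedBall x₀ R) (closedBall x₀ R)) ∧
      ∀ a x, Function.IsFixedPt (φ a) x → x ∈ closedBall x₀ R := by
  obtain ⟨M, hM⟩ := exists_dist_le_mul_dist_add hρ x₀
  have hgap : 0 < 1 - (ρ : ℝ) := sub_pos.2 (by exact_mod_cast hρ1)
  obtain ⟨R, hR⟩ : ∃ R, M < (1 - (ρ : ℝ)) * R :=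
    ⟨(M + 1) / (1 - ρ), by rw [mul_div_cancel₀ _ hgap.ne']; linarith⟩
  refine ⟨R, h.ae_mem_closedBall ρ.2 (by exact_mod_cast hρ1) hM hR, fun a x hx => ?_,
    fun a x hx => ?_⟩
  · have : ρ * dist x x₀ ≤ ρ * R := by gcongr; exact hx
    exact mem_closedBall.2 (by linarith [hM a x])
  · have hfix := hM a x
    rw [hx.eq] at hfix
    exact mem_closedBall.2 (le_of_mul_le_mul_left (by linarith) hgap)

end IsStationaryMeasure

/-! ### Hölder regularity -/

/-- Every measurable set whose trace on `K` has diameter at most `δ` has `μ`-mass at most `m`. It is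
stated for arbitrary sets, as preimages of balls under the maps of the walk need not be balls. -/
def SmallTraceMassLE {X : Type*} [PseudoMetricSpace X] [MeasurableSpace X] (μ : Measure X)
    (K : Set X) (δ m : ℝ) : Prop :=
  ∀ S, MeasurableSet S → (∀ x ∈ S ∩ K, ∀ y ∈ S ∩ K, dist x y ≤ δ) → μ.real S ≤ m

/-- Hölder (Frostman) regularity of a measure: balls of radius `r` have mass at most `C * r ^ γ`. -/
def IsHolderRegular {X : Type*} [PseudoMetricSpace X] [MeasurableSpace X] (μ : Measure X)
    (C γ : ℝ) : Prop :=
  ∀ x r, 0 < r → μ.real (closedBall x r) ≤ C * r ^ γ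

lemma le_inv_mul_rpow_logb {η θ t u : ℝ} (hη0 : 0 < η) (hη1 : η < 1) (hθ0 : 0 < θ) (hθ1 : θ < 1)
    (hu : 0 < u) (ht : t ≤ 1) (h : ∀ k : ℕ, u ≤ η ^ k → t ≤ θ ^ k) :
    t ≤ θ⁻¹ * u ^ Real.logb η θ := by
  have hγ : 0 < Real.logb η θ := Real.logb_pos_of_base_lt_one hη0 hη1 hθ0 hθ1
  rcases le_or_gt u 1 with hu1 | hu1
  · obtain ⟨k, hlt, hle⟩ := exists_nat_pow_near_of_lt_one hu hu1 hη0 hη1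
    have hpow : (η ^ (k + 1)) ^ Real.logb η θ = θ ^ (k + 1) := by
      rw [← Real.rpow_natCast, ← Real.rpow_mul hη0.le, mul_comm, Real.rpow_mul hη0.le,
        Real.rpow_logb hη0 hη1.ne hθ0, Real.rpow_natCast]
    calc t ≤ θ ^ k := h k hle
      _ = θ⁻¹ * (η ^ (k + 1)) ^ Real.logb η θ := by rw [hpow, pow_succ]; field_simp
      _ ≤ θ⁻¹ * u ^ Real.logb η θ := by gcongr
  · exact ht.trans (one_le_mul_of_one_le_of_one_le ((one_le_inv₀ hθ0).2 hθ1.le)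
      (Real.one_le_rpow hu1.le hγ.le))

lemma exists_isHolderRegular_of_smallTraceMassLE {X : Type*} [PseudoMetricSpace X]
    [MeasurableSpace X] [OpensMeasurableSpace X] {μ : Measure X} [IsProbabilityMeasure μ]
    {K : Set X} {η θ δ : ℝ} (hη0 : 0 < η) (hη1 : η < 1) (hθ0 : 0 < θ) (hθ1 : θ < 1) (hδ : 0 < δ)
    (h : ∀ k : ℕ, SmallTraceMassLE μ K (η ^ k * δ) (θ ^ k)) :
    ∃ C γ, 0 < C ∧ 0 < γ ∧ IsHolderRegular μ C γ := by
  refine ⟨θ⁻¹ * (2 / δ) ^ Real.logb η θ, Real.logb η θ, by positivity,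
    Real.logb_pos_of_base_lt_one hη0 hη1 hθ0 hθ1, fun x r hr => ?_⟩
  rw [mul_assoc, ← Real.mul_rpow (by positivity) hr.le]
  refine le_inv_mul_rpow_logb hη0 hη1 hθ0 hθ1 (by positivity) measureReal_le_one fun k hk => ?_
  refine h k _ measurableSet_closedBall fun y hy z hz => ?_
  calc dist y z ≤ dist y x + dist z x := dist_triangle_right _ _ _
    _ ≤ r + r := add_le_add hy.1 hz.1
    _ = 2 / δ * r * δ := by field_simp; ring
    _ ≤ η ^ k * δ := by gcongr

lemma eventually_lt_dist_iterate {X : Type*} [MetricSpace X] {ρ : NNReal} (hρ1 : ρ < 1)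
    {f g : X → X} (hf : LipschitzWith ρ f) (hg : LipschitzWith ρ g) {x y : X}
    (hx : Function.IsFixedPt f x) (hy : Function.IsFixedPt g y) (hxy : x ≠ y) {K : Set X}
    (hK : Bornology.IsBounded K) :
    ∀ᶠ n : ℕ in atTop, ∀ u ∈ K, ∀ v ∈ K, dist x y / 2 < dist (f^[n] u) (g^[n] v) := by
  obtain ⟨D, hDx⟩ := (isBounded_iff_subset_closedBall x).1 hK
  obtain ⟨D', hDy⟩ := (isBounded_iff_subset_closedBall y).1 hK
  have hlim : Tendsto (fun n : ℕ => (ρ : ℝ) ^ n * D + (ρ : ℝ) ^ n * D') atTop (𝓝 0) := by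
    have hpow := tendsto_pow_atTop_nhds_zero_of_lt_one ρ.2 (by exact_mod_cast hρ1 : (ρ : ℝ) < 1)
    simpa using (hpow.mul_const D).add (hpow.mul_const D')
  filter_upwards [hlim.eventually_lt_const (half_pos (dist_pos.2 hxy))] with n hn u hu v hv
  have hfu : dist (f^[n] u) x ≤ (ρ : ℝ) ^ n * D := by
    have := (hf.iterate n).dist_le_mul u x
    rw [(hx.iterate n).eq, NNReal.coe_pow] at this
    exact this.trans (by gcongr; exact hDx hu)
  have hgv : dist (g^[n] v) y ≤ (ρ : ℝ) ^ n * D' := by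
    have := (hg.iterate n).dist_le_mul v y
    rw [(hy.iterate n).eq, NNReal.coe_pow] at this
    exact this.trans (by gcongr; exact hDy hv)
  have htri := dist_triangle4 x (f^[n] u) (g^[n] v) y
  rw [dist_comm x (f^[n] u)] at htri
  linarith

namespace IsStationaryMeasure

variable {A X : Type*} [Fintype A] [MeasurableSpace X] {φ : A → X → X} {p : A → ℝ}
  {μ : Measure X} {K : Set X} {c δ m : ℝ}

lemma measureReal_le_of_iterate_notMem [PseudoMetricSpace X] [IsFiniteMeasure μ]
    (h : IsStationaryMeasure φ p μ) (hK : ∀ᵐ x ∂μ, x ∈ K) (hmaps : ∀ a, Set.MapsTo (φ a) K K)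
    (hc0 : 0 < c) (hc1 : c ≤ 1)
    (hc : ∀ a, ∀ x ∈ K, ∀ y ∈ K, c * dist x y ≤ dist (φ a x) (φ a y))
    (hδ : 0 ≤ δ) (hm : SmallTraceMassLE μ K δ m) (a : A) (n : ℕ) {S : Set X}
    (hS : MeasurableSet S) (hdiam : ∀ x ∈ S ∩ K, ∀ y ∈ S ∩ K, dist x y ≤ c ^ n * δ)
    (havoid : ∀ y ∈ K, (φ a)^[n] y ∉ S) : μ.real S ≤ (1 - p a ^ n) * m := by
  induction n generalizing S with
  | zero =>
    have hnull : μ.real S = 0 := by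
      rw [measureReal_eq_zero_iff]
      exact measure_mono_null (fun y hyS hyK => havoid y hyK hyS) hK
    simp [hnull]
  | succ n ih =>
    have hdiam' : ∀ b, ∀ x ∈ φ b ⁻¹' S ∩ K, ∀ y ∈ φ b ⁻¹' S ∩ K, dist x y ≤ c ^ n * δ := by
      refine fun b x hx y hy => le_of_mul_le_mul_left ?_ hc0
      calc c * dist x y ≤ dist (φ b x) (φ b y) := hc b x hx.2 y hy.2
        _ ≤ c ^ (n + 1) * δ := hdiam _ ⟨hx.1, hmaps b hx.2⟩ _ ⟨hy.1, hmaps b hy.2⟩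
        _ = c * (c ^ n * δ) := by ring
    have hpre : ∀ b, μ.real (φ b ⁻¹' S) ≤ m := fun b =>
      hm _ (h.measurable b hS) fun x hx y hy => (hdiam' b x hx y hy).trans
        (mul_le_of_le_one_left hδ (pow_le_one₀ hc0.le hc1))
    have hprea : μ.real (φ a ⁻¹' S) ≤ (1 - p a ^ n) * m := by
      refine ih (h.measurable a hS) (hdiam' a) fun y hy hyS => havoid y hy ?_
      rwa [Function.iterate_succ_apply']
    calc μ.real S ≤ p a * μ.real (φ a ⁻¹' S) + (1 - p a) * m := h.measureReal_le_add hS hpre a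
      _ ≤ p a * ((1 - p a ^ n) * m) + (1 - p a) * m := by gcongr; exact (h.pos a).le
      _ = (1 - p a ^ (n + 1)) * m := by ring

/-- A set too small to meet both images `(φ a₁)^[n] '' K` and `(φ a₂)^[n] '' K` is missed by one of
these two words, and so loses a fixed proportion of mass. -/
lemma smallTraceMassLE_mul [PseudoMetricSpace X] [IsFiniteMeasure μ] (h : IsStationaryMeasure φ p μ)
    (hK : ∀ᵐ x ∂μ, x ∈ K) (hmaps : ∀ a, Set.MapsTo (φ a) K K) (hc0 : 0 < c) (hc1 : c ≤ 1)
    (hc : ∀ a, ∀ x ∈ K, ∀ y ∈ K, c * dist x y ≤ dist (φ a x) (φ a y))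
    {a₁ a₂ : A} {n : ℕ} {d κ : ℝ} (hsep : ∀ u ∈ K, ∀ v ∈ K, d < dist ((φ a₁)^[n] u) ((φ a₂)^[n] v))
    (hκ₁ : κ ≤ p a₁ ^ n) (hκ₂ : κ ≤ p a₂ ^ n) (hδ : 0 ≤ δ) (hδd : c ^ n * δ ≤ d) (hm0 : 0 ≤ m)
    (hm : SmallTraceMassLE μ K δ m) : SmallTraceMassLE μ K (c ^ n * δ) ((1 - κ) * m) := by
  intro S hS hdiam
  have hle : ∀ a, κ ≤ p a ^ n → (∀ u ∈ K, (φ a)^[n] u ∉ S) → μ.real S ≤ (1 - κ) * m :=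
    fun a hκ havoid => (h.measureReal_le_of_iterate_notMem hK hmaps hc0 hc1 hc hδ hm a n hS hdiam
      havoid).trans (by gcongr)
  by_cases h₁ : ∀ u ∈ K, (φ a₁)^[n] u ∉ S
  · exact hle a₁ hκ₁ h₁
  refine hle a₂ hκ₂ fun v hv hvS => ?_
  push Not at h₁
  obtain ⟨u, hu, huS⟩ := h₁
  have hdist := hdiam _ ⟨huS, (hmaps a₁).iterate n hu⟩ _ ⟨hvS, (hmaps a₂).iterate n hv⟩
  linarith [hsep u hu v hv]

theorem exists_isHolderRegular [MetricSpace X] [OpensMeasurableSpace X] [IsProbabilityMeasure μ]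
    (h : IsStationaryMeasure φ p μ) (hK : ∀ᵐ x ∂μ, x ∈ K) (hKb : Bornology.IsBounded K)
    (hmaps : ∀ a, Set.MapsTo (φ a) K K) {ρ : NNReal} (hρ1 : ρ < 1)
    (hρ : ∀ a, LipschitzWith ρ (φ a)) (hc0 : 0 < c)
    (hc : ∀ a, ∀ x ∈ K, ∀ y ∈ K, c * dist x y ≤ dist (φ a x) (φ a y))
    {a₁ a₂ : A} {x₁ x₂ : X} (hx₁ : Function.IsFixedPt (φ a₁) x₁)
    (hx₂ : Function.IsFixedPt (φ a₂) x₂) (hx₁K : x₁ ∈ K) (hx₂K : x₂ ∈ K) (hne : x₁ ≠ x₂) :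
    ∃ C γ, 0 < C ∧ 0 < γ ∧ IsHolderRegular μ C γ := by
  have hd : 0 < dist x₁ x₂ := dist_pos.2 hne
  have hcρ : c ≤ ρ := le_of_mul_le_mul_right
    ((hc a₁ x₁ hx₁K x₂ hx₂K).trans ((hρ a₁).dist_le_mul x₁ x₂)) hd
  have hc1 : c < 1 := hcρ.trans_lt (by exact_mod_cast hρ1)
  obtain ⟨n, hsep, hn⟩ := ((eventually_lt_dist_iterate hρ1 (hρ a₁) (hρ a₂) hx₁ hx₂ hne hKb).and
    (eventually_ne_atTop 0)).exists
  obtain ⟨κ, hκ0, hκ⟩ := exists_between (a₁ := 0) (a₂ := min (1 / 2) (min (p a₁ ^ n) (p a₂ ^ n)))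
    (by have := h.pos a₁; have := h.pos a₂; positivity)
  obtain ⟨hκ1, hκ₁, hκ₂⟩ : κ < 1 / 2 ∧ κ < p a₁ ^ n ∧ κ < p a₂ ^ n := by simpa using hκ
  have hη0 : 0 < c ^ n := by positivity
  have hη1 : c ^ n < 1 := pow_lt_one₀ hc0.le hc1 hn
  have hθ0 : 0 < 1 - κ := by linarith
  refine exists_isHolderRegular_of_smallTraceMassLE (K := K) (θ := 1 - κ) hη0 hη1 hθ0
    (by linarith) (half_pos hd) fun k => ?_
  induction k with
  | zero => exact fun S _ _ => by simp
  | succ k ih =>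
    rw [pow_succ', pow_succ', mul_assoc]
    refine h.smallTraceMassLE_mul hK hmaps hc0 hc1.le hc hsep hκ₁.le hκ₂.le (by positivity) ?_
      (by positivity) ih
    rw [← mul_assoc, ← pow_succ']
    exact mul_le_of_le_one_left (half_pos hd).le (pow_le_one₀ hη0.le hη1.le)

end IsStationaryMeasure

/-! ### Separated sets on the line -/

lemma mul_dist_le_dist_image_of_le_abs_deriv {g : ℝ → ℝ} (hg : Differentiable ℝ g) {K : Set ℝ}
    (hK : Convex ℝ K) {m : ℝ} (hm : ∀ z ∈ K, m ≤ |deriv g z|) {x y : ℝ} (hx : x ∈ K)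
    (hy : y ∈ K) : m * dist x y ≤ dist (g x) (g y) := by
  wlog hxy : x < y generalizing x y
  · rcases (not_lt.1 hxy).eq_or_lt with rfl | hyx
    · simp
    · rw [dist_comm x, dist_comm (g x)]
      exact this hy hx hyx
  obtain ⟨z, hz, hslope⟩ := exists_deriv_eq_slope g hxy hg.continuous.continuousOn
    hg.differentiableOn
  have hzK : z ∈ K := hK.ordConnected.out hx hy (Set.Ioo_subset_Icc_self hz)
  have hbound := hm z hzK
  rwa [hslope, abs_div, le_div_iff₀ (abs_pos.2 (sub_pos.2 hxy).ne'), ← Real.dist_eq,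
    ← Real.dist_eq, dist_comm y, dist_comm (g y)] at hbound

lemma dist_image_le_mul_dist_of_abs_deriv_le {g : ℝ → ℝ} (hg : Differentiable ℝ g) {K : Set ℝ}
    (hK : Convex ℝ K) {M : ℝ} (hM : ∀ z ∈ K, |deriv g z| ≤ M) {x y : ℝ} (hx : x ∈ K)
    (hy : y ∈ K) : dist (g x) (g y) ≤ M * dist x y := by
  simpa only [dist_eq_norm] using
    hK.norm_image_sub_le_of_norm_deriv_le (fun z _ => hg z) hM hy hx

/-- `S` is `r`-separated. The inequality is not strict, unlike in `Metric.IsSeparated`, so that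
fractions with denominators at most `Q` are `1 / Q ^ 2`-separated. -/
def IsSeparatedBy {X : Type*} [PseudoMetricSpace X] (r : ℝ) (S : Set X) : Prop :=
  S.Pairwise fun x y => r ≤ dist x y

namespace IsSeparatedBy

variable {r : ℝ} {S : Set ℝ}

lemma injOn_floor_div (hr : 0 < r) (hS : IsSeparatedBy r S) :
    Set.InjOn (fun x : ℝ => ⌊x / r⌋) S := by
  intro x hx y hy hxy
  by_contra hne
  have hlt : |x / r - y / r| < 1 := Int.abs_sub_lt_one_of_floor_eq_floor hxy
  rw [← sub_div, abs_div, abs_of_pos hr, div_lt_one hr] at hlt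
  exact hlt.not_ge (hS hx hy hne)

lemma countable (hr : 0 < r) (hS : IsSeparatedBy r S) : S.Countable :=
  Set.MapsTo.countable_of_injOn (Set.mapsTo_univ _ _) (hS.injOn_floor_div hr) Set.countable_univ

lemma inter_Icc_finite_and_ncard_le (hr : 0 < r) (hS : IsSeparatedBy r S) {a b : ℝ} (hab : a ≤ b) :
    (S ∩ Set.Icc a b).Finite ∧ ((S ∩ Set.Icc a b).ncard : ℝ) ≤ (b - a) / r + 2 := by
  have hmaps : Set.MapsTo (fun x : ℝ => ⌊x / r⌋) (S ∩ Set.Icc a b)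
      (Finset.Icc ⌊a / r⌋ ⌊b / r⌋ : Finset ℤ) := fun x hx => by
    rw [Finset.coe_Icc]
    exact ⟨Int.floor_mono (div_le_div_of_nonneg_right hx.2.1 hr.le),
      Int.floor_mono (div_le_div_of_nonneg_right hx.2.2 hr.le)⟩
  have hinj := (hS.injOn_floor_div hr).mono (Set.inter_subset_left (t := Set.Icc a b))
  refine ⟨Set.Finite.of_injOn hmaps hinj (Finset.finite_toSet _), ?_⟩
  have hcard := Set.ncard_le_ncard_of_injOn _ hmaps hinj (Finset.finite_toSet _)
  rw [Set.ncard_coe_finset, Int.card_Icc] at hcard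
  have hfloor : ⌊a / r⌋ ≤ ⌊b / r⌋ := Int.floor_mono (div_le_div_of_nonneg_right hab hr.le)
  have hcast : (((⌊b / r⌋ + 1 - ⌊a / r⌋).toNat : ℤ) : ℝ) = ⌊b / r⌋ + 1 - ⌊a / r⌋ := by
    rw [Int.toNat_of_nonneg (by omega)]
    push_cast
    rfl
  calc ((S ∩ Set.Icc a b).ncard : ℝ) ≤ ((⌊b / r⌋ + 1 - ⌊a / r⌋).toNat : ℝ) := by
        exact_mod_cast hcard
    _ = ⌊b / r⌋ + 1 - ⌊a / r⌋ := by exact_mod_cast hcast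
    _ ≤ (b - a) / r + 2 := by
        rw [sub_div]
        linarith [Int.floor_le (b / r), Int.lt_floor_add_one (a / r)]

end IsSeparatedBy

lemma IsHolderRegular.measureReal_le_of_dist_le {X : Type*} [PseudoMetricSpace X]
    [MeasurableSpace X] {μ : Measure X} [IsFiniteMeasure μ] {C γ : ℝ} (hC : 0 ≤ C)
    (hμ : IsHolderRegular μ C γ) {δ : ℝ} (hδ : 0 < δ) {S : Set X}
    (hS : ∀ x ∈ S, ∀ y ∈ S, dist x y ≤ δ) : μ.real S ≤ C * δ ^ γ := by
  rcases S.eq_empty_or_nonempty with rfl | ⟨y, hy⟩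
  · rw [measureReal_empty]
    positivity
  · exact (measureReal_mono fun x hx => mem_closedBall.2 (hS x hx y hy)).trans (hμ y δ hδ)

/-- Only boundedly many of the balls meet `g '' K`, since this set has diameter at most `r * D`. -/
lemma IsHolderRegular.measureReal_preimage_biUnion_closedBall_le {X : Type*} [PseudoMetricSpace X]
    [MeasurableSpace X] {μ : Measure X} [IsFiniteMeasure μ] {C γ : ℝ} (hC : 0 ≤ C)
    (hμ : IsHolderRegular μ C γ) {K : Set X} (hK : ∀ᵐ x ∂μ, x ∈ K) {z : X} (hz : z ∈ K) {D : ℝ}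
    (hD : ∀ x ∈ K, dist x z ≤ D) {g : X → ℝ} {m r : ℝ} (hm : 0 < m) (hr : 0 < r)
    (hlow : ∀ x ∈ K, ∀ y ∈ K, m * r * dist x y ≤ dist (g x) (g y))
    (hupp : ∀ x ∈ K, ∀ y ∈ K, dist (g x) (g y) ≤ r * dist x y) {S : Set ℝ}
    (hS : IsSeparatedBy r S) {ε : ℝ} (hε0 : 0 < ε) (hε1 : ε ≤ 1) :
    μ.real (g ⁻¹' ⋃ x ∈ S, closedBall x (r * ε)) ≤ (2 * D + 4) * (C * (2 * ε / m) ^ γ) := by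
  have hD0 : 0 ≤ D := dist_nonneg.trans (hD z hz)
  have hR : 0 ≤ r * (D + 1) := by positivity
  obtain ⟨hfin, hcard⟩ := hS.inter_Icc_finite_and_ncard_le hr
    (show g z - r * (D + 1) ≤ g z + r * (D + 1) by linarith)
  set T := hfin.toFinset
  have hcover : (g ⁻¹' ⋃ x ∈ S, closedBall x (r * ε)) ∩ K ⊆
      ⋃ x ∈ T, g ⁻¹' closedBall x (r * ε) ∩ K := by
    rintro y ⟨hy, hyK⟩
    obtain ⟨x, hxS, hyx⟩ : ∃ x ∈ S, g y ∈ closedBall x (r * ε) := by simpa using hy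
    refine Set.mem_biUnion (hfin.mem_toFinset.2 ⟨hxS, ?_⟩) ⟨hyx, hyK⟩
    rw [← Real.closedBall_eq_Icc]
    calc dist x (g z) ≤ dist (g y) x + dist (g y) (g z) := dist_triangle_left _ _ _
      _ ≤ r * ε + r * D := add_le_add hyx ((hupp y hyK z hz).trans (by gcongr; exact hD y hyK))
      _ ≤ r * (D + 1) := by rw [← mul_add, add_comm D]; gcongr
  have hpiece : ∀ x ∈ T, μ.real (g ⁻¹' closedBall x (r * ε) ∩ K) ≤ C * (2 * ε / m) ^ γ := by
    refine fun x _ => hμ.measureReal_le_of_dist_le hC (by positivity) fun y hy y' hy' => ?_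
    rw [le_div_iff₀ hm]
    refine le_of_mul_le_mul_left ?_ hr
    calc r * (dist y y' * m) = m * r * dist y y' := by ring
      _ ≤ dist (g y) (g y') := hlow y hy.2 y' hy'.2
      _ ≤ dist (g y) x + dist (g y') x := dist_triangle_right _ _ _
      _ ≤ r * ε + r * ε := add_le_add hy.1 hy'.1
      _ = r * (2 * ε) := by ring
  calc μ.real (g ⁻¹' ⋃ x ∈ S, closedBall x (r * ε))
      = μ.real ((g ⁻¹' ⋃ x ∈ S, closedBall x (r * ε)) ∩ K) :=
        (measureReal_congr (inter_ae_eq_left_of_ae_eq_univ (eventuallyEq_univ.2 hK))).symm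
    _ ≤ ∑ x ∈ T, μ.real (g ⁻¹' closedBall x (r * ε) ∩ K) :=
        (measureReal_mono hcover (measure_ne_top _ _)).trans (measureReal_biUnion_finset_le _ _)
    _ ≤ T.card * (C * (2 * ε / m) ^ γ) := by
        simpa only [nsmul_eq_mul] using Finset.sum_le_card_nsmul T _ _ hpiece
    _ ≤ (2 * D + 4) * (C * (2 * ε / m) ^ γ) := by
        rw [← Set.ncard_eq_toFinset_card _ hfin]
        refine mul_le_mul_of_nonneg_right (hcard.trans_eq ?_) (by positivity)
        field_simp
        ring

/-! ### Bounded distortion and stopped words -/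

/-- Hölder control of the distortion of `g` on `K`: the Hölder bound, rather than a constant one, is
what makes the distortions of the successive letters of a word add up geometrically. -/
def HasDistortion (L α : ℝ) (K : Set ℝ) (g : ℝ → ℝ) : Prop :=
  ∀ x ∈ K, ∀ y ∈ K, |deriv g x| ≤ |deriv g y| * Real.exp (L * |x - y| ^ α)

lemma hasDistortion_of_abs_deriv_sub_le {g : ℝ → ℝ} {K : Set ℝ} {H α c : ℝ} (hH : 0 ≤ H)
    (hc : 0 < c) (hlow : ∀ x ∈ K, c ≤ |deriv g x|)
    (hhol : ∀ x ∈ K, ∀ y ∈ K, |deriv g x| - |deriv g y| ≤ H * |x - y| ^ α) :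
    HasDistortion (H / c) α K g := fun x hx y hy =>
  calc |deriv g x| ≤ |deriv g y| + c * (H / c * |x - y| ^ α) := by
        rw [← mul_assoc, mul_div_cancel₀ _ hc.ne']
        linarith [hhol x hx y hy]
    _ ≤ |deriv g y| + |deriv g y| * (H / c * |x - y| ^ α) := by gcongr; exact hlow y hy
    _ = |deriv g y| * (H / c * |x - y| ^ α + 1) := by ring
    _ ≤ |deriv g y| * Real.exp (H / c * |x - y| ^ α) := by
        gcongr; exact Real.add_one_le_exp _

namespace HasDistortion

variable {L L' α : ℝ} {K : Set ℝ} {f g : ℝ → ℝ}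

lemma comp (hf : HasDistortion L α K f) (hg : HasDistortion L' α K g) (hL : 0 ≤ L) (hα : 0 ≤ α)
    (hfd : Differentiable ℝ f) (hgd : Differentiable ℝ g) (hmaps : Set.MapsTo g K K) {ρ : NNReal}
    (hρ : LipschitzWith ρ g) : HasDistortion (L * ρ ^ α + L') α K (f ∘ g) := by
  intro x hx y hy
  have hgxy : |g x - g y| ^ α ≤ ρ ^ α * |x - y| ^ α := by
    rw [← Real.mul_rpow ρ.coe_nonneg (abs_nonneg _)]
    exact Real.rpow_le_rpow (abs_nonneg _) (hρ.dist_le_mul x y) hα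
  rw [deriv_comp x (hfd _) (hgd _), deriv_comp y (hfd _) (hgd _), abs_mul, abs_mul]
  calc |deriv f (g x)| * |deriv g x|
      ≤ (|deriv f (g y)| * Real.exp (L * |g x - g y| ^ α)) *
          (|deriv g y| * Real.exp (L' * |x - y| ^ α)) :=
        mul_le_mul (hf _ (hmaps hx) _ (hmaps hy)) (hg x hx y hy) (abs_nonneg _) (by positivity)
    _ ≤ (|deriv f (g y)| * Real.exp (L * (ρ ^ α * |x - y| ^ α))) *
          (|deriv g y| * Real.exp (L' * |x - y| ^ α)) := by gcongr
    _ = |deriv f (g y)| * |deriv g y| * Real.exp ((L * ρ ^ α + L') * |x - y| ^ α) := by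
        rw [add_mul, Real.exp_add]
        ring_nf

lemma abs_deriv_le (hg : HasDistortion L α K g) (hL : 0 ≤ L) (hα : 0 ≤ α) {d : ℝ}
    (hd : ∀ x ∈ K, ∀ y ∈ K, |x - y| ≤ d) {x y : ℝ} (hx : x ∈ K) (hy : y ∈ K) :
    |deriv g x| ≤ Real.exp (L * d ^ α) * |deriv g y| := by
  rw [mul_comm]
  refine (hg x hx y hy).trans ?_
  gcongr
  exact hd x hx y hy

end HasDistortion

section Words

variable {A : Type*}

lemma listMap_append_singleton {X : Type*} (φ : A → X → X) (l : List A) (a : A) :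
    listMap φ (l ++ [a]) = listMap φ l ∘ φ a := by
  induction l with
  | nil => rfl
  | cons b l ih => rw [List.cons_append, listMap, ih, listMap, Function.comp_assoc]

lemma differentiable_listMap {φ : A → E → E} (hφ : ∀ a, Differentiable ℝ (φ a)) (l : List A) :
    Differentiable ℝ (listMap φ l) := by
  induction l with
  | nil => exact differentiable_id
  | cons a l ih => exact (hφ a).comp ih

variable {φ : A → ℝ → ℝ}

lemma abs_deriv_listMap_append_singleton (hφ : ∀ a, Differentiable ℝ (φ a)) (l : List A) (a : A)
    (x : ℝ) :
    |deriv (listMap φ (l ++ [a])) x| = |deriv (listMap φ l) (φ a x)| * |deriv (φ a) x| := by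
  rw [listMap_append_singleton, deriv_comp x (differentiable_listMap hφ l _) (hφ a x), abs_mul]

/-- The constant `L / (1 - ρ ^ α)` solves `L' * ρ ^ α + L = L'`, so it survives appending a
letter. -/
lemma hasDistortion_listMap (hφ : ∀ a, Differentiable ℝ (φ a)) {K : Set ℝ}
    (hmaps : ∀ a, Set.MapsTo (φ a) K K) {ρ : NNReal} (hρ1 : ρ < 1)
    (hρ : ∀ a, LipschitzWith ρ (φ a)) {L α : ℝ} (hL : 0 ≤ L) (hα : 0 < α)
    (hdist : ∀ a, HasDistortion L α K (φ a)) (l : List A) :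
    HasDistortion (L / (1 - ρ ^ α)) α K (listMap φ l) := by
  have hgap : 0 < 1 - (ρ : ℝ) ^ α :=
    sub_pos.2 (Real.rpow_lt_one ρ.2 (by exact_mod_cast hρ1) hα)
  induction l using List.reverseRecOn with
  | nil =>
    intro x _ y _
    simp only [listMap, deriv_id, abs_one, one_mul]
    exact Real.one_le_exp (by positivity)
  | append_singleton l a ih =>
    have hfix : L / (1 - ρ ^ α) * ρ ^ α + L = L / (1 - ρ ^ α) := by field_simp; ring
    rw [listMap_append_singleton, ← hfix]
    exact ih.comp (hdist a) (by positivity) hα.le (differentiable_listMap hφ l) (hφ a) (hmaps a)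
      (hρ a)

end Words

/-- The maps `φ a` are `ρ`-contractions of `ℝ` leaving `K` invariant, with derivatives at least `c`
in absolute value on `K`, and all their compositions have distortion at most `D` on `K`. This is the
form in which the stopping argument uses the regularity of a conformal IFS. -/
structure IsUniformlyConformalOn {A : Type*} (φ : A → ℝ → ℝ) (K : Set ℝ) (ρ : NNReal)
    (c D : ℝ) : Prop where
  differentiable : ∀ a, Differentiable ℝ (φ a)
  mapsTo : ∀ a, Set.MapsTo (φ a) K K
  lipschitzWith : ∀ a, LipschitzWith ρ (φ a)
  ratio_lt_one : ρ < 1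
  pos : 0 < c
  le_abs_deriv : ∀ a, ∀ x ∈ K, c ≤ |deriv (φ a) x|
  abs_deriv_listMap_le : ∀ l, ∀ x ∈ K, ∀ y ∈ K,
    |deriv (listMap φ l) x| ≤ D * |deriv (listMap φ l) y|

namespace IsUniformlyConformalOn

variable {A : Type*} {φ : A → ℝ → ℝ} {K : Set ℝ} {ρ : NNReal} {c D : ℝ}

lemma one_le_distortion (hφ : IsUniformlyConformalOn φ K ρ c D) (hK : K.Nonempty) : 1 ≤ D := by
  obtain ⟨z, hz⟩ := hK
  simpa [listMap] using hφ.abs_deriv_listMap_le [] z hz z hz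

lemma abs_deriv_le (hφ : IsUniformlyConformalOn φ K ρ c D) (a : A) (x : ℝ) :
    |deriv (φ a) x| ≤ ρ :=
  norm_deriv_le_of_lipschitz (hφ.lipschitzWith a)

lemma div_distortion_le_one [Nonempty A] (hφ : IsUniformlyConformalOn φ K ρ c D)
    (hK : K.Nonempty) : c / D ≤ 1 := by
  obtain ⟨z, hz⟩ := hK
  have hD := hφ.one_le_distortion ⟨z, hz⟩
  have hcρ := (hφ.le_abs_deriv (Classical.arbitrary A) z hz).trans (hφ.abs_deriv_le _ z)
  have hρ1 : (ρ : ℝ) < 1 := by exact_mod_cast hφ.ratio_lt_one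
  exact (div_le_one (by linarith)).2 (by linarith)

lemma div_mul_le_abs_deriv_listMap_append_singleton (hφ : IsUniformlyConformalOn φ K ρ c D)
    {l : List A} {r z : ℝ} (hz : z ∈ K) (hlarge : r < |deriv (listMap φ l) z|) (a : A) {x : ℝ}
    (hx : x ∈ K) : c / D * r ≤ |deriv (listMap φ (l ++ [a])) x| := by
  have hD : 0 < D := zero_lt_one.trans_le (hφ.one_le_distortion ⟨z, hz⟩)
  have hc := hφ.pos
  rw [abs_deriv_listMap_append_singleton hφ.differentiable, div_mul_eq_mul_div, div_le_iff₀ hD]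
  calc c * r ≤ c * (D * |deriv (listMap φ l) (φ a x)|) := by
        gcongr
        exact hlarge.le.trans (hφ.abs_deriv_listMap_le l z hz _ (hφ.mapsTo a hx))
    _ ≤ |deriv (φ a) x| * (D * |deriv (listMap φ l) (φ a x)|) := by
        gcongr
        exact hφ.le_abs_deriv a x hx
    _ = _ := by ring

end IsUniformlyConformalOn

namespace IsStationaryMeasure

variable {A : Type*} [Fintype A] {φ : A → ℝ → ℝ} {p : A → ℝ} {μ : Measure ℝ}
  {K : Set ℝ} {ρ : NNReal} {c D : ℝ}

/-- Append letters to the empty word until its derivative drops to at most `r`: by bounded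
distortion it has then dropped by no more than the factor `c / D` below `r`. -/
lemma measureReal_le_of_stopped [IsFiniteMeasure μ] (h : IsStationaryMeasure φ p μ)
    (hφ : IsUniformlyConformalOn φ K ρ c D) (hK : K.Nonempty) {r : ℝ} (hr0 : 0 < r) (hr1 : r ≤ 1)
    {S : Set ℝ} (hS : MeasurableSet S) {b : ℝ}
    (hb : ∀ l, (∀ x ∈ K, c / D * r ≤ |deriv (listMap φ l) x|) →
      (∀ x ∈ K, |deriv (listMap φ l) x| ≤ r) → μ.real (listMap φ l ⁻¹' S) ≤ b) :
    μ.real S ≤ b := by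
  have hwords : ∀ n : ℕ, ∀ l, (∀ x ∈ K, (ρ : ℝ) ^ n * |deriv (listMap φ l) x| ≤ r) →
      (∀ x ∈ K, c / D * r ≤ |deriv (listMap φ l) x|) → μ.real (listMap φ l ⁻¹' S) ≤ b := by
    intro n
    induction n with
    | zero => exact fun l hupp hlow => hb l hlow (by simpa using hupp)
    | succ n ih =>
      intro l hupp hlow
      by_cases hsmall : ∀ x ∈ K, |deriv (listMap φ l) x| ≤ r
      · exact hb l hlow hsmall
      push Not at hsmall
      obtain ⟨z, hz, hlarge⟩ := hsmall
      have hl := differentiable_listMap hφ.differentiable l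
      refine h.measureReal_le (hl.continuous.measurable hS) fun a => ?_
      rw [← Set.preimage_comp, ← listMap_append_singleton]
      refine ih _ (fun x hx => ?_)
        fun x hx => hφ.div_mul_le_abs_deriv_listMap_append_singleton hz hlarge a hx
      calc (ρ : ℝ) ^ n * |deriv (listMap φ (l ++ [a])) x|
          = ρ ^ n * (|deriv (listMap φ l) (φ a x)| * |deriv (φ a) x|) := by
            rw [abs_deriv_listMap_append_singleton hφ.differentiable]
        _ ≤ ρ ^ n * (|deriv (listMap φ l) (φ a x)| * ρ) := by gcongr; exact hφ.abs_deriv_le a x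
        _ = ρ ^ (n + 1) * |deriv (listMap φ l) (φ a x)| := by ring
        _ ≤ r := hupp _ (hφ.mapsTo a hx)
  have : Nonempty A := h.nonempty
  obtain ⟨n, hn⟩ := exists_pow_lt_of_lt_one hr0 (show (ρ : ℝ) < 1 from hφ.ratio_lt_one)
  refine hwords n [] (fun x _ => ?_) fun x _ => ?_
  · simpa [listMap] using hn.le
  · simpa [listMap] using mul_le_one₀ (hφ.div_distortion_le_one hK) hr0.le hr1

end IsStationaryMeasure

/-- The `r * ε`-neighbourhood of any `r`-separated set has `μ`-mass at most `B * ε ^ γ`, uniformly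
in the scale `r ≤ 1`. -/
def HasSeparatedDecay (μ : Measure ℝ) (B γ : ℝ) : Prop :=
  ∀ r ε, 0 < r → r ≤ 1 → 0 < ε → ∀ S, IsSeparatedBy r S →
    μ.real (⋃ x ∈ S, closedBall x (r * ε)) ≤ B * ε ^ γ

theorem IsStationaryMeasure.exists_hasSeparatedDecay {A : Type*} [Fintype A] {φ : A → ℝ → ℝ}
    {p : A → ℝ} {μ : Measure ℝ} [IsProbabilityMeasure μ] (h : IsStationaryMeasure φ p μ)
    {K : Set ℝ} {ρ : NNReal} {c D : ℝ} (hφ : IsUniformlyConformalOn φ K ρ c D)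
    (hK : ∀ᵐ x ∂μ, x ∈ K) (hKc : Convex ℝ K) (hKb : Bornology.IsBounded K) {C γ : ℝ} (hC : 0 ≤ C)
    (hγ : 0 ≤ γ) (hμ : IsHolderRegular μ C γ) : ∃ B, HasSeparatedDecay μ B γ := by
  obtain ⟨z, hz⟩ := hK.exists
  obtain ⟨d, hd⟩ := (isBounded_iff_subset_closedBall z).1 hKb
  have hm : 0 < c / D := div_pos hφ.pos (zero_lt_one.trans_le (hφ.one_le_distortion ⟨z, hz⟩))
  set B := (2 * d + 4) * (C * (2 / (c / D)) ^ γ)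
  refine ⟨max 1 B, fun r ε hr0 hr1 hε0 S hS => ?_⟩
  rcases le_total ε 1 with hε1 | hε1
  · refine h.measureReal_le_of_stopped hφ ⟨z, hz⟩ hr0 hr1
      (.biUnion (hS.countable hr0) fun _ _ => measurableSet_closedBall) fun l hlow hupp => ?_
    have hl := differentiable_listMap hφ.differentiable l
    calc μ.real (listMap φ l ⁻¹' ⋃ x ∈ S, closedBall x (r * ε))
        ≤ (2 * d + 4) * (C * (2 * ε / (c / D)) ^ γ) :=
          hμ.measureReal_preimage_biUnion_closedBall_le hC hK hz (fun x hx => hd hx) hm hr0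
            (fun x hx y hy => mul_dist_le_dist_image_of_le_abs_deriv hl hKc hlow hx hy)
            (fun x hx y hy => dist_image_le_mul_dist_of_abs_deriv_le hl hKc hupp hx hy)
            hS hε0 hε1
      _ = B * ε ^ γ := by
          rw [mul_div_right_comm, Real.mul_rpow (by positivity) hε0.le]
          ring
      _ ≤ max 1 B * ε ^ γ := by gcongr; exact le_max_right _ _
  · exact measureReal_le_one.trans
      (one_le_mul_of_one_le_of_one_le (le_max_left _ _) (Real.one_le_rpow hε1 hγ))

/-! ### Self-conformal IFSs on the line -/

namespace IsSelfConformalIFS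

variable {A : Type*} [Fintype A]

lemma exists_lipschitzWith {φ : A → E → E} (hΦ : IsSelfConformalIFS φ) :
    ∃ ρ : NNReal, ρ < 1 ∧ ∀ a, LipschitzWith ρ (φ a) := by
  obtain ⟨-, hcontr, -⟩ := hΦ
  choose r hr using hcontr
  refine ⟨Finset.univ.sup fun a => (r a).toNNReal, ?_, fun a => ?_⟩
  · exact (Finset.sup_lt_iff one_pos).2 fun a _ => Real.toNNReal_lt_one.2 (hr a).2.1
  · refine LipschitzWith.weaken (LipschitzWith.of_dist_le_mul fun x y => ?_)
      (Finset.le_sup (f := fun a => (r a).toNNReal) (Finset.mem_univ a))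
    rw [Real.coe_toNNReal _ (hr a).1.le, dist_eq_norm, dist_eq_norm]
    exact (hr a).2.2 x y

lemma exists_le_norm_fderiv {φ : A → E → E} (hΦ : IsSelfConformalIFS φ) {K : Set E}
    (hK : IsCompact K) : ∃ c, 0 < c ∧ ∀ a, ∀ x ∈ K, c ≤ ‖fderiv ℝ (φ a) x‖ := by
  obtain ⟨-, -, hC1, hconf, -⟩ := hΦ
  have hletter : ∀ a, ∀ᶠ c in 𝓝[>] (0 : ℝ), ∀ x ∈ K, c ≤ ‖fderiv ℝ (φ a) x‖ := fun a => by
    obtain ⟨c, hc, hle⟩ := hK.exists_forall_le'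
      ((hC1 a).continuous_fderiv one_ne_zero).norm.continuousOn fun x _ => (hconf a x).1
    filter_upwards [Ioc_mem_nhdsGT hc] with t ht x hx using ht.2.trans (hle x hx)
  obtain ⟨c, hc, hc0⟩ := ((eventually_all.2 hletter).and self_mem_nhdsWithin).exists
  exact ⟨c, hc0, hc⟩

variable {φ : A → ℝ → ℝ}

lemma exists_isUniformlyConformalOn (hΦ : IsSelfConformalIFS φ) {ρ : NNReal} (hρ1 : ρ < 1)
    (hρ : ∀ a, LipschitzWith ρ (φ a)) {K : Set ℝ} (hK : IsCompact K)
    (hmaps : ∀ a, Set.MapsTo (φ a) K K) : ∃ c D, IsUniformlyConformalOn φ K ρ c D := by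
  obtain ⟨c, hc0, hc⟩ := hΦ.exists_le_norm_fderiv hK
  obtain ⟨-, -, hC1, -, ⟨H, α, hH, hα, hhol⟩, -⟩ := hΦ
  simp only [← norm_deriv_eq_norm_fderiv, Real.norm_eq_abs] at hc hhol
  have hdiff : ∀ a, Differentiable ℝ (φ a) := fun a => (hC1 a).differentiable one_ne_zero
  have hdist : ∀ a, HasDistortion (H / c) α K (φ a) := fun a =>
    hasDistortion_of_abs_deriv_sub_le hH.le hc0 (hc a) fun x _ y _ =>
      (le_abs_self _).trans (hhol a x y)
  have hgap : 0 < 1 - (ρ : ℝ) ^ α :=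
    sub_pos.2 (Real.rpow_lt_one ρ.coe_nonneg (by exact_mod_cast hρ1) hα)
  refine ⟨c, Real.exp (H / c / (1 - ρ ^ α) * diam K ^ α), hdiff, hmaps, hρ, hρ1, hc0, hc,
    fun l x hx y hy => ?_⟩
  exact (hasDistortion_listMap hdiff hmaps hρ1 hρ (by positivity) hα hdist l).abs_deriv_le
    (by positivity) hα.le (fun u hu v hv => dist_le_diam_of_mem hK.isBounded hu hv) hx hy

theorem exists_hasSeparatedDecay (hΦ : IsSelfConformalIFS φ) {p : A → ℝ} {μ : Measure ℝ}
    [IsProbabilityMeasure μ] (h : IsStationaryMeasure φ p μ) :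
    ∃ B γ, 0 < γ ∧ HasSeparatedDecay μ B γ := by
  obtain ⟨ρ, hρ1, hρ⟩ := hΦ.exists_lipschitzWith
  obtain ⟨R, hR, hmaps, hfix⟩ := h.exists_invariant_closedBall hρ1 hρ 0
  obtain ⟨c, D, hφ⟩ := hΦ.exists_isUniformlyConformalOn hρ1 hρ (isCompact_closedBall 0 R) hmaps
  obtain ⟨-, -, -, -, -, a₁, a₂, x₁, x₂, hx₁, hx₂, hne⟩ := hΦ
  have hconv : Convex ℝ (closedBall (0 : ℝ) R) := convex_closedBall 0 R
  obtain ⟨C, γ, hC, hγ, hreg⟩ := h.exists_isHolderRegular hR isBounded_closedBall hmaps hρ1 hρ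
    hφ.pos (fun a x hx y hy => mul_dist_le_dist_image_of_le_abs_deriv (hφ.differentiable a) hconv
      (hφ.le_abs_deriv a) hx hy) hx₁ hx₂ (hfix a₁ x₁ hx₁) (hfix a₂ x₂ hx₂) hne
  obtain ⟨B, hdecay⟩ :=
    h.exists_hasSeparatedDecay hφ hR hconv isBounded_closedBall hC.le hγ.le hreg
  exact ⟨B, γ, hγ, hdecay⟩

end IsSelfConformalIFS

/-! ### Diophantine approximation -/

/-- The fractions with denominator at most `Q`: the Farey fractions of order `Q` and their integer
translates. -/
def fractionsUpTo (Q : ℕ) : Set ℝ :=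
  {x | ∃ (a : ℤ) (q : ℕ), 0 < q ∧ q ≤ Q ∧ x = a / q}

lemma isSeparatedBy_fractionsUpTo (Q : ℕ) : IsSeparatedBy (1 / (Q : ℝ) ^ 2) (fractionsUpTo Q) := by
  rintro _ ⟨a, q, hq, hqQ, rfl⟩ _ ⟨b, s, hs, hsQ, rfl⟩ hne
  have hq' : (0 : ℝ) < q := by exact_mod_cast hq
  have hs' : (0 : ℝ) < s := by exact_mod_cast hs
  have hdiff : (a / q : ℝ) - b / s = ((a * s - q * b : ℤ) : ℝ) / (q * s) := by
    rw [div_sub_div _ _ hq'.ne' hs'.ne']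
    push_cast
    rfl
  have hnum : a * s - q * b ≠ 0 := fun h0 => hne (by
    rwa [h0, Int.cast_zero, zero_div, sub_eq_zero] at hdiff)
  have hone : (1 : ℝ) ≤ |((a * s - q * b : ℤ) : ℝ)| := by exact_mod_cast Int.one_le_abs hnum
  rw [Real.dist_eq, hdiff, abs_div, abs_of_pos (mul_pos hq' hs'), pow_two]
  gcongr

/-- The points with infinitely many approximations `|x - p / q| ≤ ε q / q ^ 2`; the pairs `(p, q)`
are not required to be coprime. -/
def approximableSet (ε : ℕ → ℝ) : Set ℝ :=
  {x | {pq : ℤ × ℕ | 2 ≤ pq.2 ∧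
    |x - (pq.1 : ℝ) / (pq.2 : ℝ)| ≤ (pq.2 : ℝ) ^ (-(2 : ℝ)) * ε pq.2}.Infinite}

/-- The union of the balls of radius `ε (2 ^ k) / 4 ^ k` around the fractions with denominator at
most `2 ^ (k + 1)`; the radius is written as a multiple of the separation of these fractions. -/
def dyadicNbhd (ε : ℕ → ℝ) (k : ℕ) : Set ℝ :=
  ⋃ y ∈ fractionsUpTo (2 ^ (k + 1)),
    closedBall y (1 / ((2 ^ (k + 1) : ℕ) : ℝ) ^ 2 * (4 * ε (2 ^ k)))

lemma finite_int_abs_sub_div_le (x : ℝ) {q : ℕ} (hq : 0 < q) (W : ℝ) :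
    {a : ℤ | |x - (a : ℝ) / q| ≤ W}.Finite := by
  have hq' : (0 : ℝ) < q := by exact_mod_cast hq
  refine (Set.finite_Icc ⌈(x - W) * q⌉ ⌊(x + W) * q⌋).subset fun a ha => ?_
  obtain ⟨hlow, hupp⟩ := abs_sub_le_iff.1 (show |x - (a : ℝ) / q| ≤ W from ha)
  rw [Set.mem_Icc, Int.ceil_le, Int.le_floor, ← le_div_iff₀ hq', ← div_le_iff₀ hq']
  constructor <;> linarith

lemma exists_approximation_of_mem_approximableSet {ε : ℕ → ℝ} {x : ℝ} (hx : x ∈ approximableSet ε)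
    (N : ℕ) : ∃ (a : ℤ) (q : ℕ), N < q ∧ 2 ≤ q ∧
      |x - (a : ℝ) / q| ≤ (q : ℝ) ^ (-(2 : ℝ)) * ε q := by
  by_contra! hno
  refine hx (Set.Finite.of_finite_fibers Prod.snd ((Set.finite_Iic N).subset ?_) ?_)
  · rintro _ ⟨⟨a, q⟩, ⟨hq2, haq⟩, rfl⟩
    exact not_lt.1 fun hNq => (hno a q hNq hq2).not_ge haq
  · rintro _ ⟨⟨_, q⟩, ⟨hq2, _⟩, rfl⟩
    refine ((finite_int_abs_sub_div_le x (zero_lt_two.trans_le hq2)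
      ((q : ℝ) ^ (-(2 : ℝ)) * ε q)).image (·, q)).subset ?_
    rintro ⟨a, _⟩ ⟨⟨_, haq⟩, rfl⟩
    exact ⟨a, haq, rfl⟩

lemma frequently_mem_dyadicNbhd {ε : ℕ → ℝ} (hpos : ∀ q, 2 ≤ q → 0 < ε q)
    (hanti : AntitoneOn ε (Set.Ici 2)) {x : ℝ} (hx : x ∈ approximableSet ε) :
    ∃ᶠ k in atTop, x ∈ dyadicNbhd ε (k + 1) := by
  refine frequently_atTop.2 fun N => ?_
  obtain ⟨a, q, hNq, hq2, hxq⟩ := exists_approximation_of_mem_approximableSet hx (2 ^ (N + 1))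
  have hlog : N + 1 ≤ Nat.log 2 q := Nat.le_log_of_pow_le one_lt_two hNq.le
  obtain ⟨k, hk⟩ : ∃ k, Nat.log 2 q = k + 1 := ⟨Nat.log 2 q - 1, by omega⟩
  have hkq : 2 ^ (k + 1) ≤ q := hk ▸ Nat.pow_log_le_self 2 (by omega)
  have hqk : q < 2 ^ (k + 2) := (Nat.lt_pow_succ_log_self one_lt_two q).trans_eq (by rw [hk])
  have h2k : 2 ≤ 2 ^ (k + 1) := Nat.le_self_pow k.succ_ne_zero 2
  refine ⟨k, by omega, Set.mem_biUnion ⟨a, q, by omega, hqk.le, rfl⟩ (mem_closedBall.2 ?_)⟩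
  have hεq := (hpos q hq2).le
  calc dist x (a / q) ≤ (q : ℝ) ^ (-(2 : ℝ)) * ε q := hxq
    _ = 1 / (q : ℝ) ^ 2 * ε q := by rw [Real.rpow_neg q.cast_nonneg, Real.rpow_two, one_div]
    _ ≤ 1 / ((2 ^ (k + 1) : ℕ) : ℝ) ^ 2 * ε (2 ^ (k + 1)) := by
        gcongr
        exact hanti h2k hq2 hkq
    _ = 1 / ((2 ^ (k + 2) : ℕ) : ℝ) ^ 2 * (4 * ε (2 ^ (k + 1))) := by
        push_cast
        field_simp
        ring

theorem HasSeparatedDecay.measure_approximableSet_eq_zero {μ : Measure ℝ} [IsFiniteMeasure μ]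
    {B γ : ℝ} (hμ : HasSeparatedDecay μ B γ) {ε : ℕ → ℝ} (hpos : ∀ q, 2 ≤ q → 0 < ε q)
    (hanti : AntitoneOn ε (Set.Ici 2)) (hsum : Summable fun k : ℕ => ε (2 ^ k) ^ γ) :
    μ (approximableSet ε) = 0 := by
  have hmass : ∀ k, μ (dyadicNbhd ε (k + 1)) ≤
      ENNReal.ofReal (B * 4 ^ γ * ε (2 ^ (k + 1)) ^ γ) := fun k => by
    have hε : 0 < ε (2 ^ (k + 1)) := hpos _ (Nat.le_self_pow k.succ_ne_zero 2)
    have hscale : 1 / ((2 ^ (k + 2) : ℕ) : ℝ) ^ 2 ≤ 1 :=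
      div_le_one_of_le₀ (one_le_pow₀ (by exact_mod_cast Nat.one_le_two_pow)) (by positivity)
    rw [← ofReal_measureReal, mul_assoc, ← Real.mul_rpow zero_le_four hε.le]
    exact ENNReal.ofReal_le_ofReal (hμ _ _ (by positivity) hscale (by positivity) _
      (isSeparatedBy_fractionsUpTo _))
  have hfinite : ∑' k, μ (dyadicNbhd ε (k + 1)) ≠ ⊤ :=
    ne_top_of_le_ne_top (((summable_nat_add_iff 1).2 hsum).mul_left _).tsum_ofReal_ne_top
      (ENNReal.tsum_le_tsum hmass)
  exact measure_mono_null (fun x hx => frequently_mem_dyadicNbhd hpos hanti hx)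
    (measure_setOfPred_frequently_eq_zero hfinite)

lemma log_natCast_pos {q : ℕ} (hq : 2 ≤ q) : 0 < Real.log q :=
  Real.log_pos (by exact_mod_cast hq)

lemma antitoneOn_log_rpow_neg {β : ℝ} (hβ : 0 ≤ β) :
    AntitoneOn (fun q : ℕ => Real.log q ^ (-β)) (Set.Ici 2) := by
  intro q hq s _ hqs
  have hq' : 0 < Real.log q := log_natCast_pos hq
  refine Real.rpow_le_rpow_of_nonpos hq' (Real.log_le_log ?_ (by exact_mod_cast hqs)) (by linarith)
  exact_mod_cast zero_lt_two.trans_le hq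

lemma summable_log_two_pow_rpow {β γ : ℝ} (hβγ : 1 < β * γ) :
    Summable fun k : ℕ => (Real.log ((2 ^ k : ℕ) : ℝ) ^ (-β)) ^ γ := by
  have hlog : ∀ k : ℕ, (Real.log ((2 ^ k : ℕ) : ℝ) ^ (-β)) ^ γ =
      (k : ℝ) ^ (-β * γ) * Real.log 2 ^ (-β * γ) := fun k => by
    have h2 : 0 ≤ Real.log 2 := Real.log_nonneg one_le_two
    rw [Nat.cast_pow, Nat.cast_ofNat, Real.log_pow, ← Real.rpow_mul (by positivity),
      Real.mul_rpow k.cast_nonneg h2]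
  simp only [hlog]
  exact (Real.summable_nat_rpow.2 (by linarith)).mul_right _

theorem self_conformal_log_null_general
    {A : Type*} [Fintype A]
    (φ : A → ℝ → ℝ) (hΦ : IsSelfConformalIFS φ)
    (p : A → ℝ) (hp : ∀ a, 0 < p a) (hp1 : ∑ a, p a = 1)
    (μ : Measure ℝ) [IsProbabilityMeasure μ]
    (hstat : μ = ∑ a, ENNReal.ofReal (p a) • Measure.map (φ a) μ) :
    ∃ γ : ℝ, 0 < γ ∧ ∀ ε : ℕ → ℝ, (∀ q, 2 ≤ q → 0 < ε q) → AntitoneOn ε (Set.Ici 2) →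
      Summable (fun k : ℕ => ε (2 ^ k) ^ γ) →
      μ {x : ℝ | {pq : ℤ × ℕ | 2 ≤ pq.2 ∧
        |x - (pq.1 : ℝ) / (pq.2 : ℝ)| ≤ (pq.2 : ℝ) ^ (-(2 : ℝ)) * ε pq.2}.Infinite} = 0 := by
  have hmeas : ∀ a, Measurable (φ a) := fun a => (hΦ.2.2.1 a).continuous.measurable
  obtain ⟨B, γ, hγ, hdecay⟩ := hΦ.exists_hasSeparatedDecay ⟨hmeas, hp, hp1, hstat⟩
  exact ⟨γ, hγ, fun ε hpos hanti hsum => hdecay.measure_approximableSet_eq_zero hpos hanti hsum⟩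

/-- Log-refined Diophantine statement for self-conformal measures on ℝ. -/
theorem self_conformal_log_null
    {A : Type*} [Fintype A]
    (φ : A → ℝ → ℝ) (hΦ : IsSelfConformalIFS φ)
    (p : A → ℝ) (hp : ∀ a, 0 < p a) (hp1 : ∑ a, p a = 1)
    (μ : Measure ℝ) [IsProbabilityMeasure μ]
    (hstat : μ = ∑ a, ENNReal.ofReal (p a) • Measure.map (φ a) μ)
    (hna : ∀ x, μ {x} = 0) :
    ∃ α : ℝ, 0 < α ∧ ∀ β : ℝ, α < β →
      μ {x : ℝ | {pq : ℤ × ℕ | 2 ≤ pq.2 ∧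
          |x - (pq.1 : ℝ) / (pq.2 : ℝ)| ≤
            (pq.2 : ℝ) ^ (-(2 : ℝ)) * Real.log pq.2 ^ (-β)}.Infinite} = 0 := by
  obtain ⟨γ, hγ, hnull⟩ := self_conformal_log_null_general φ hΦ p hp hp1 μ hstat
  refine ⟨1 / γ, by positivity, fun β hβ => hnull (fun q => Real.log q ^ (-β))
    (fun q hq => Real.rpow_pos_of_pos (log_natCast_pos hq) _)
    (antitoneOn_log_rpow_neg ((one_div_pos.2 hγ).trans hβ).le)
    (summable_log_two_pow_rpow ((div_lt_iff₀ hγ).1 hβ))⟩
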